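/- Let (v_k)_{k≥1} be a sequence of positive reals with ∑_{k=1}^∞ v_k = X < ∞ satisfying: (i) A(v) + A(v) = [0, 2X]; (ii) for every a ∈ (0, 2X) there exists a nondegenerate interval I_a ⊆ A(v) such that for every t ∈ I_a there exists z ∈ A(v) with t + z = a. Let (w_k)_{k≥1} be a sequence of nonzero reals with alternating signs (w_k · w_{k+1} < 0 for all k) such that ∑_{k=1}^∞ w_k is conditionally convergent. Define the sequence of pairs in ℝ² by x_{4k−3} = x_{4k−2} = v_k, x_{4k−1} = x_{4k} = −v_k, and y_{2k−1} = w_k, y_{2k} = 0 for every k ≥ 1. Then A((x_n, y_n)_n) = (−2X, 2X) × ℝ. -/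

import Mathlib

open Filter Topology Pointwise

/-- The achievement set of a sequence: all limits of partial sums of subseries. -/
def achv {X : Type*} [AddCommMonoid X] [TopologicalSpace X] (x : ℕ → X) : Set X :=
  {s | ∃ ε : ℕ → Bool,
    Tendsto (fun N => ∑ n ∈ Finset.range N, if ε n then x n else 0) atTop (𝓝 s)}

/-!
Write `u` for the sequence `v₀, -v₀, v₁, -v₁, …`. The pairs of even index are `(uₙ, wₙ)` and those
of odd index are `(uₙ, 0)`; since the latter are summable, the achievement set is the Minkowski
sum `A(u, w) + A(u) × {0}`, and the hypothesis on `A(v) + A(v)` says that `A(u) = [-X, X]`.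

The extreme value `X` of the first coordinate is reached in `A(u, w)` only by selecting precisely
the positive terms of `u`, and then the second coordinate diverges. On the other hand a greedy
choice gives the second coordinate any prescribed limit after any prescribed initial selection, so
every fibre of `A(u, w)` comes arbitrarily close to `X`. Complementing selections yields the same
at `-X`. Hence each fibre of `A(u, w)` is contained in `(-X, X)` with supremum `X` and infimum
`-X`, and its sum with `[-X, X]` is `(-2X, 2X)`.
-/

section AchievementSets

variable {E F : Type*}

lemma mem_achv_iff_exists_set [AddCommMonoid E] [TopologicalSpace E] {x : ℕ → E} {s : E} :
    s ∈ achv x ↔ ∃ T : Set ℕ,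
      Tendsto (fun N => ∑ n ∈ Finset.range N, T.indicator x n) atTop (𝓝 s) := by
  classical
  constructor
  · rintro ⟨ε, hε⟩
    exact ⟨{n | ε n = true}, by simpa only [Set.indicator_apply, Set.mem_ofPred_eq] using hε⟩
  · rintro ⟨T, hT⟩
    exact ⟨fun n => decide (n ∈ T), by simpa only [Set.indicator_apply, decide_eq_true_eq] using hT⟩

lemma mem_achv_prodMk_iff [AddCommMonoid E] [TopologicalSpace E] [AddCommMonoid F]
    [TopologicalSpace F] {x : ℕ → E} {y : ℕ → F} {a : E} {b : F} :
    (a, b) ∈ achv (fun n => (x n, y n)) ↔ ∃ T : Set ℕ,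
      Tendsto (fun N => ∑ n ∈ Finset.range N, T.indicator x n) atTop (𝓝 a) ∧
      Tendsto (fun N => ∑ n ∈ Finset.range N, T.indicator y n) atTop (𝓝 b) := by
  classical
  simp only [mem_achv_iff_exists_set, Prod.tendsto_iff, Prod.fst_sum, Prod.snd_sum,
    Set.indicator_apply, apply_ite Prod.fst, apply_ite Prod.snd, Prod.fst_zero, Prod.snd_zero]

lemma achv_prodMk_zero [AddCommMonoid E] [TopologicalSpace E] [AddCommMonoid F]
    [TopologicalSpace F] [T2Space F] (x : ℕ → E) :
    achv (fun n => (x n, (0 : F))) = achv x ×ˢ {0} := by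
  ext ⟨a, b⟩
  rw [mem_achv_prodMk_iff, Set.mem_prod, mem_achv_iff_exists_set]
  simp [tendsto_const_nhds_iff, eq_comm (a := b)]

lemma achv_neg [AddCommGroup E] [TopologicalSpace E] [ContinuousNeg E] (x : ℕ → E) :
    achv (-x) = -achv x := by
  ext s
  simp only [Set.mem_neg, mem_achv_iff_exists_set]
  refine exists_congr fun T => ?_
  rw [← tendsto_neg_iff]
  simp [Set.indicator_neg']

lemma sub_mem_achv [AddCommGroup E] [TopologicalSpace E] [ContinuousSub E] {x : ℕ → E} {s t : E}
    (hs : Tendsto (fun N => ∑ n ∈ Finset.range N, x n) atTop (𝓝 s)) (ht : t ∈ achv x) :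
    s - t ∈ achv x := by
  obtain ⟨T, hT⟩ := mem_achv_iff_exists_set.1 ht
  exact mem_achv_iff_exists_set.2 ⟨Tᶜ, by simpa [Set.indicator_compl] using hs.sub hT⟩

lemma mem_achv_sub_achv_iff [AddCommGroup E] [TopologicalSpace E] [ContinuousSub E]
    {v : ℕ → E} {X a : E} (hX : Tendsto (fun N => ∑ k ∈ Finset.range N, v k) atTop (𝓝 X)) :
    a ∈ achv v - achv v ↔ a + X ∈ achv v + achv v := by
  constructor
  · rintro ⟨s, hs, t, ht, rfl⟩
    exact ⟨s, hs, X - t, sub_mem_achv hX ht, by dsimp only; abel⟩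
  · rintro ⟨s, hs, t, ht, hst : s + t = a + X⟩
    exact ⟨s, hs, X - t, sub_mem_achv hX ht,
      by dsimp only; rw [sub_sub_eq_add_sub, hst, add_sub_cancel_right]⟩

lemma tendsto_zero_of_tendsto_sum_range [AddCommGroup E] [TopologicalSpace E]
    [ContinuousSub E] {f : ℕ → E} {s : E}
    (hs : Tendsto (fun N => ∑ n ∈ Finset.range N, f n) atTop (𝓝 s)) : Tendsto f atTop (𝓝 0) := by
  simpa [Finset.sum_range_succ] using (hs.comp (tendsto_add_atTop_nat 1)).sub hs

lemma sum_range_eq_sum_even_add_sum_odd [AddCommMonoid E] (f : ℕ → E) (N : ℕ) :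
    ∑ n ∈ Finset.range N, f n =
      ∑ k ∈ Finset.range ((N + 1) / 2), f (2 * k) + ∑ k ∈ Finset.range (N / 2), f (2 * k + 1) := by
  induction N with
  | zero => simp
  | succ N ih =>
    rw [Finset.sum_range_succ, ih]
    obtain ⟨m, rfl | rfl⟩ := N.even_or_odd'
    · rw [show (2 * m + 1 + 1) / 2 = m + 1 by omega, show (2 * m + 1) / 2 = m by omega,
        show 2 * m / 2 = m by omega, Finset.sum_range_succ, add_right_comm]
    · rw [show (2 * m + 1 + 1 + 1) / 2 = m + 1 by omega, show (2 * m + 1 + 1) / 2 = m + 1 by omega,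
        show (2 * m + 1) / 2 = m by omega, Finset.sum_range_succ (fun k => f (2 * k + 1)),
        add_assoc]

lemma tendsto_sum_range_of_even_of_odd [AddCommMonoid E] [TopologicalSpace E] [ContinuousAdd E]
    {f : ℕ → E} {s t : E}
    (he : Tendsto (fun N => ∑ k ∈ Finset.range N, f (2 * k)) atTop (𝓝 s))
    (ho : Tendsto (fun N => ∑ k ∈ Finset.range N, f (2 * k + 1)) atTop (𝓝 t)) :
    Tendsto (fun N => ∑ n ∈ Finset.range N, f n) atTop (𝓝 (s + t)) := by
  have hhalf : Tendsto (fun N : ℕ => N / 2) atTop atTop := Nat.tendsto_div_const_atTop two_ne_zero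
  simp_rw [sum_range_eq_sum_even_add_sum_odd f]
  exact (he.comp (hhalf.comp (tendsto_add_atTop_nat 1))).add (ho.comp hhalf)

lemma tendsto_sum_range_even_of_odd [AddCommGroup E] [TopologicalSpace E] [ContinuousSub E]
    {f : ℕ → E} {s t : E}
    (h : Tendsto (fun N => ∑ n ∈ Finset.range N, f n) atTop (𝓝 s))
    (ho : Tendsto (fun N => ∑ k ∈ Finset.range N, f (2 * k + 1)) atTop (𝓝 t)) :
    Tendsto (fun N => ∑ k ∈ Finset.range N, f (2 * k)) atTop (𝓝 (s - t)) := by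
  have hdouble : Tendsto (fun N : ℕ => 2 * N) atTop atTop :=
    tendsto_id.const_mul_atTop' two_pos
  refine ((h.comp hdouble).sub ho).congr fun N => ?_
  rw [Function.comp_apply, sum_range_eq_sum_even_add_sum_odd,
    show (2 * N + 1) / 2 = N by omega, show 2 * N / 2 = N by omega, add_sub_cancel_right]

lemma tendsto_sum_range_even_iff [AddCommGroup E] [TopologicalSpace E] [IsTopologicalAddGroup E]
    {f : ℕ → E} {s : E} :
    Tendsto (fun N => ∑ k ∈ Finset.range N, f (2 * k)) atTop (𝓝 s) ↔
      Tendsto (fun N => ∑ n ∈ Finset.range N, {n | Even n}.indicator f n) atTop (𝓝 s) := by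
  have heven (k : ℕ) : {n | Even n}.indicator f (2 * k) = f (2 * k) := by simp
  have hodd : Tendsto (fun N => ∑ k ∈ Finset.range N, {n | Even n}.indicator f (2 * k + 1))
      atTop (𝓝 0) := by simp [tendsto_const_nhds]
  constructor <;> intro h
  · simpa only [add_zero] using
      tendsto_sum_range_of_even_of_odd (by simpa only [heven] using h) hodd
  · simpa only [sub_zero, heven] using tendsto_sum_range_even_of_odd h hodd

lemma exists_preimage_even_eq_preimage_odd_eq (S R : Set ℕ) :
    ∃ T : Set ℕ, (2 * ·) ⁻¹' T = S ∧ (2 * · + 1) ⁻¹' T = R := by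
  refine ⟨{n | (n % 2 = 0 ∧ n / 2 ∈ S) ∨ (n % 2 = 1 ∧ n / 2 ∈ R)}, ?_, ?_⟩ <;> ext k
  · simp
  · simp [Nat.add_mod, show (2 * k + 1) / 2 = k by omega]

theorem achv_eq_achv_even_add_achv_odd [AddCommGroup E] [UniformSpace E] [IsUniformAddGroup E]
    [CompleteSpace E] {z : ℕ → E} (hodd : Summable fun k => z (2 * k + 1)) :
    achv z = achv (fun k => z (2 * k)) + achv (fun k => z (2 * k + 1)) := by
  ext s
  simp only [Set.mem_add, mem_achv_iff_exists_set]
  constructor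
  · rintro ⟨T, hT⟩
    obtain ⟨t, ht⟩ := hodd.indicator ((2 * · + 1) ⁻¹' T)
    exact ⟨s - t, ⟨_, tendsto_sum_range_even_of_odd hT ht.tendsto_sum_nat⟩,
      t, ⟨_, ht.tendsto_sum_nat⟩, sub_add_cancel s t⟩
  · rintro ⟨s, ⟨S, hS⟩, t, ⟨R, hR⟩, rfl⟩
    obtain ⟨T, rfl, rfl⟩ := exists_preimage_even_eq_preimage_odd_eq S R
    exact ⟨T, tendsto_sum_range_of_even_of_odd hS hR⟩

end AchievementSets

section SummableSubsums

variable {ι : Type*} {u : ι → ℝ}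

lemma posPart_le_abs {α : Type*} [AddCommGroup α] [LinearOrder α] [IsOrderedAddMonoid α] (a : α) :
    a⁺ ≤ |a| :=
  sup_le (le_abs_self a) (abs_nonneg a)

lemma summable_posPart (hu : Summable u) : Summable fun n => (u n)⁺ :=
  .of_nonneg_of_le (fun n => posPart_nonneg (u n)) (fun n => posPart_le_abs (u n)) hu.abs

lemma tendsto_sum_range_indicator_iff {u : ℕ → ℝ} (hu : Summable u) {T : Set ℕ} {s : ℝ} :
    Tendsto (fun N => ∑ n ∈ Finset.range N, T.indicator u n) atTop (𝓝 s) ↔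
      ∑' n, T.indicator u n = s := by
  have hT := (hu.indicator T).hasSum.tendsto_sum_nat
  exact ⟨tendsto_nhds_unique hT, fun h => h ▸ hT⟩

lemma indicator_le_posPart {α : Type*} [AddGroup α] [Lattice α] (T : Set ι) (u : ι → α) (n : ι) :
    T.indicator u n ≤ (u n)⁺ :=
  Set.indicator_apply_le' (fun _ => le_posPart (u n)) (fun _ => posPart_nonneg (u n))

lemma indicator_eq_posPart_iff {T : Set ι} {n : ι} (hn : u n ≠ 0) :
    T.indicator u n = (u n)⁺ ↔ (n ∈ T ↔ 0 < u n) := by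
  rcases hn.lt_or_gt with h | h
  · simp [h.le, h.not_gt, hn]
  · simp [h.le, h, posPart_of_nonneg, hn]

lemma tsum_indicator_lt_tsum_posPart (hu : Summable u) (hu0 : ∀ n, u n ≠ 0) {T : Set ι}
    (hT : T ≠ {n | 0 < u n}) : ∑' n, T.indicator u n < ∑' n, (u n)⁺ := by
  obtain ⟨n, hn⟩ : ∃ n, ¬(n ∈ T ↔ 0 < u n) := by
    by_contra! h
    exact hT (Set.ext h)
  have hlt : T.indicator u n < (u n)⁺ :=
    (indicator_le_posPart T u n).lt_of_ne ((indicator_eq_posPart_iff (hu0 n)).not.2 hn)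
  exact (hu.indicator T).tsum_lt_tsum (indicator_le_posPart T u) hlt (summable_posPart hu)

lemma exists_forall_lt_tsum_indicator {u : ℕ → ℝ} (hu : Summable u) (hu0 : ∀ n, u n ≠ 0) {c : ℝ}
    (hc : c < ∑' n, (u n)⁺) :
    ∃ N, ∀ T : Set ℕ, (∀ n < N, n ∈ T ↔ 0 < u n) → c < ∑' n, T.indicator u n := by
  obtain ⟨N, hN⟩ := (hu.abs.hasSum.tendsto_sum_nat.eventually_const_lt
    (show ∑' n, |u n| - (∑' n, (u n)⁺ - c) < ∑' n, |u n| by linarith)).exists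
  refine ⟨N, fun T hT => ?_⟩
  let g : ℕ → ℝ := fun n => T.indicator u n - (u n)⁺ + |u n|
  have hg : HasSum g (∑' n, T.indicator u n - ∑' n, (u n)⁺ + ∑' n, |u n|) :=
    ((hu.indicator T).hasSum.sub (summable_posPart hu).hasSum).add hu.abs.hasSum
  have hg_nonneg (n : ℕ) : 0 ≤ g n := by
    have hneg : -T.indicator u n ≤ (u n)⁻ := by
      simpa [Set.indicator_neg'] using indicator_le_posPart T (-u) n
    linarith [posPart_add_negPart (u n)]
  have hg_eq : ∑ n ∈ Finset.range N, g n = ∑ n ∈ Finset.range N, |u n| := by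
    refine Finset.sum_congr rfl fun n hn => ?_
    simp only [g]
    rw [(indicator_eq_posPart_iff (hu0 n)).2 (hT n (Finset.mem_range.1 hn)), sub_self, zero_add]
  have := sum_le_hasSum (Finset.range N) (fun n _ => hg_nonneg n) hg
  linarith

end SummableSubsums

section ConditionalConvergence

/-- The sums of the greedy selection of terms of `u` aiming at `b`: starting from `0`, the next
term is selected if it is positive and the current sum is at most `b`, or if it is negative and the
current sum exceeds `b`. -/
noncomputable def greedySum (u : ℕ → ℝ) (b : ℝ) : ℕ → ℝ
  | 0 => 0
  | n + 1 => if greedySum u b n ≤ b then greedySum u b n + (u n)⁺ else greedySum u b n - (u n)⁻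

variable {u S : ℕ → ℝ} {b s : ℝ}

lemma sum_range_indicator_greedy (u : ℕ → ℝ) (b : ℝ) (n : ℕ) :
    ∑ k ∈ Finset.range n, {k | greedySum u b k ≤ b ↔ 0 ≤ u k}.indicator u k = greedySum u b n := by
  induction n with
  | zero => rfl
  | succ n ih =>
    rw [Finset.sum_range_succ, ih, greedySum]
    rcases le_or_gt (greedySum u b n) b with hS | hS <;> rcases le_or_gt 0 (u n) with hun | hun
    · simp [hS, hun]
    · simp [hS, hun.not_ge, hun.le]
    · simp [hS.not_ge, hun]
    · simp [hS.not_ge, hun.not_ge, hun.le]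

lemma exists_ge_of_add_posPart (hpos : ¬Summable fun n => (u n)⁺)
    (hlt : ∀ n, S n < b → S (n + 1) = S n + (u n)⁺) (M : ℕ) : ∃ n ≥ M, b ≤ S n := by
  by_contra! hS
  refine hpos ((summable_nat_add_iff M).1 (summable_of_sum_range_le (c := b - S M)
    (fun n => posPart_nonneg _) fun n => ?_))
  have hstep (k : ℕ) : (u (k + M))⁺ = S (k + 1 + M) - S (k + M) := by
    rw [add_right_comm, hlt _ (hS _ (Nat.le_add_left M k)), add_sub_cancel_left]
  simp_rw [hstep, Finset.sum_range_sub (fun k => S (k + M)), zero_add]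
  linarith [hS (n + M) (Nat.le_add_left M n)]

lemma eventually_sub_lt_of_add_posPart (hu : Tendsto u atTop (𝓝 0))
    (hpos : ¬Summable fun n => (u n)⁺) (hstep : ∀ n, |S (n + 1) - S n| ≤ |u n|)
    (hlt : ∀ n, S n < b → S (n + 1) = S n + (u n)⁺) {e : ℝ} (he : 0 < e) :
    ∀ᶠ n in atTop, b - e < S n := by
  obtain ⟨M, hM⟩ := eventually_atTop.1 (hu.abs.eventually_lt_const (abs_zero.trans_lt he))
  obtain ⟨m, hmM, hm⟩ := exists_ge_of_add_posPart hpos hlt M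
  filter_upwards [eventually_ge_atTop m] with n hn
  induction n, hn using Nat.le_induction with
  | base => linarith
  | succ n hn ih =>
    rcases lt_or_ge (S n) b with h | h
    · linarith [hlt n h, posPart_nonneg (u n)]
    · linarith [neg_abs_le (S (n + 1) - S n), hstep n, hM n (hmM.trans hn)]

lemma abs_greedySum_succ_sub_le (u : ℕ → ℝ) (b : ℝ) (n : ℕ) :
    |greedySum u b (n + 1) - greedySum u b n| ≤ |u n| := by
  rw [greedySum]
  split_ifs
  · rw [add_sub_cancel_left, abs_of_nonneg (posPart_nonneg (u n))]
    exact posPart_le_abs (u n)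
  · rw [sub_sub_cancel_left, abs_neg, abs_of_nonneg (negPart_nonneg (u n)), ← abs_neg]
    exact posPart_le_abs (-u n)

lemma tendsto_greedySum (hu : Tendsto u atTop (𝓝 0)) (hpos : ¬Summable fun n => (u n)⁺)
    (hneg : ¬Summable fun n => (u n)⁻) : Tendsto (greedySum u b) atTop (𝓝 b) := by
  have hgt (n : ℕ) (hn : (-greedySum u b) n < -b) :
      (-greedySum u b) (n + 1) = (-greedySum u b) n + ((-u) n)⁺ := by
    rw [Pi.neg_apply, neg_lt_neg_iff] at hn
    simp [greedySum, hn.not_ge, neg_add_eq_sub]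
  refine tendsto_order.2 ⟨fun c hc => ?_, fun c hc => ?_⟩
  · filter_upwards [eventually_sub_lt_of_add_posPart hu hpos (abs_greedySum_succ_sub_le u b)
      (fun n hn => by rw [greedySum, if_pos hn.le]) (sub_pos.2 hc)] with n hn
    linarith
  · filter_upwards [eventually_sub_lt_of_add_posPart (u := -u) (S := -greedySum u b) (b := -b)
      (neg_zero (G := ℝ) ▸ hu.neg) (by simpa using hneg)
      (fun n => by simpa [neg_add_eq_sub, abs_sub_comm] using abs_greedySum_succ_sub_le u b n)
      hgt (sub_pos.2 hc)] with n hn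
    rw [Pi.neg_apply] at hn
    linarith

lemma exists_tendsto_sum_range_indicator (hu : Tendsto u atTop (𝓝 0))
    (hpos : ¬Summable fun n => (u n)⁺) (hneg : ¬Summable fun n => (u n)⁻) (b : ℝ) :
    ∃ T : Set ℕ, Tendsto (fun N => ∑ n ∈ Finset.range N, T.indicator u n) atTop (𝓝 b) := by
  refine ⟨{k | greedySum u b k ≤ b ↔ 0 ≤ u k}, ?_⟩
  simpa only [sum_range_indicator_greedy] using tendsto_greedySum hu hpos hneg

lemma not_summable_posPart (hs : Tendsto (fun N => ∑ n ∈ Finset.range N, u n) atTop (𝓝 s))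
    (hu : ¬Summable u) : ¬Summable fun n => (u n)⁺ := by
  intro hpos
  have hneg : HasSum (fun n => (u n)⁻) (∑' n, (u n)⁺ - s) := by
    refine (hasSum_iff_tendsto_nat_of_nonneg (fun n => negPart_nonneg (u n)) _).2
      ((hpos.hasSum.tendsto_sum_nat.sub hs).congr fun N => ?_)
    rw [← Finset.sum_sub_distrib]
    exact Finset.sum_congr rfl fun n _ => by linarith [posPart_sub_negPart (u n)]
  exact hu ((hpos.sub hneg.summable).congr fun n => posPart_sub_negPart (u n))

lemma not_summable_negPart (hs : Tendsto (fun N => ∑ n ∈ Finset.range N, u n) atTop (𝓝 s))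
    (hu : ¬Summable u) : ¬Summable fun n => (u n)⁻ :=
  not_summable_posPart (s := -s) (u := fun n => -u n)
    (by simpa only [Finset.sum_neg_distrib] using hs.neg) (summable_neg_iff.not.2 hu)

lemma exists_tendsto_sum_range_indicator_extending
    (hs : Tendsto (fun N => ∑ n ∈ Finset.range N, u n) atTop (𝓝 s)) (hu : ¬Summable u) (P : Set ℕ)
    (K : ℕ) (b : ℝ) :
    ∃ T : Set ℕ, (∀ n < K, n ∈ T ↔ n ∈ P) ∧
      Tendsto (fun N => ∑ n ∈ Finset.range N, T.indicator u n) atTop (𝓝 b) := by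
  obtain ⟨R, hR⟩ := exists_tendsto_sum_range_indicator (u := fun n => u (n + K))
    ((tendsto_zero_of_tendsto_sum_range hs).comp (tendsto_add_atTop_nat K))
    ((summable_nat_add_iff (f := fun n => (u n)⁺) K).not.2 (not_summable_posPart hs hu))
    ((summable_nat_add_iff (f := fun n => (u n)⁻) K).not.2 (not_summable_negPart hs hu))
    (b - ∑ n ∈ Finset.range K, P.indicator u n)
  let T : Set ℕ := {n | n < K ∧ n ∈ P ∨ K ≤ n ∧ n - K ∈ R}
  have hTP (n : ℕ) (hn : n < K) : n ∈ T ↔ n ∈ P := by simp [T, hn, hn.not_ge]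
  have hTR (n : ℕ) : T.indicator u (K + n) = R.indicator (fun n => u (n + K)) n := by
    classical simp [Set.indicator_apply, T, add_comm]
  have hPK (n : ℕ) (hn : n ∈ Finset.range K) : T.indicator u n = P.indicator u n := by
    classical simp only [Set.indicator_apply, hTP n (Finset.mem_range.1 hn)]
  refine ⟨T, hTP, (tendsto_add_atTop_iff_nat K).1 ?_⟩
  convert hR.const_add (∑ n ∈ Finset.range K, P.indicator u n) using 2 with N
  · rw [add_comm N K, Finset.sum_range_add, Finset.sum_congr rfl hPK]
    simp_rw [hTR]
  · ring

end ConditionalConvergence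

section DoubledSequences

variable {u w : ℕ → ℝ} {s b c : ℝ}

lemma lt_tsum_posPart_of_mem_achv (hu : Summable u) (hu0 : ∀ n, u n ≠ 0)
    (hwpos : ¬∃ t, Tendsto (fun N => ∑ n ∈ Finset.range N, {n | 0 < u n}.indicator w n) atTop (𝓝 t))
    (hc : (c, b) ∈ achv (fun n => (u n, w n))) : c < ∑' n, (u n)⁺ := by
  obtain ⟨T, hTu, hTw⟩ := mem_achv_prodMk_iff.1 hc
  rw [← (tendsto_sum_range_indicator_iff hu).1 hTu]
  exact tsum_indicator_lt_tsum_posPart hu hu0 fun hT => hwpos ⟨b, hT ▸ hTw⟩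

lemma exists_lt_mem_achv (hu : Summable u) (hu0 : ∀ n, u n ≠ 0)
    (hs : Tendsto (fun N => ∑ n ∈ Finset.range N, w n) atTop (𝓝 s)) (hw : ¬Summable w)
    (hc : c < ∑' n, (u n)⁺) (b : ℝ) : ∃ d, c < d ∧ (d, b) ∈ achv (fun n => (u n, w n)) := by
  obtain ⟨K, hK⟩ := exists_forall_lt_tsum_indicator hu hu0 hc
  obtain ⟨T, hTK, hTw⟩ := exists_tendsto_sum_range_indicator_extending hs hw {n | 0 < u n} K b
  exact ⟨_, hK T hTK, mem_achv_prodMk_iff.2 ⟨T, (tendsto_sum_range_indicator_iff hu).2 rfl, hTw⟩⟩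

lemma sub_mem_achv_prodMk (hu : Summable u)
    (hs : Tendsto (fun N => ∑ n ∈ Finset.range N, w n) atTop (𝓝 s))
    (hc : (c, b) ∈ achv (fun n => (u n, w n))) :
    (∑' n, (u n)⁺ - ∑' n, (u n)⁻ - c, s - b) ∈ achv (fun n => (u n, w n)) := by
  have htsum : ∑' n, (u n)⁺ - ∑' n, (u n)⁻ = ∑' n, u n := by
    have hneg : Summable fun n => (u n)⁻ := summable_posPart hu.neg
    simp only [← (summable_posPart hu).tsum_sub hneg, posPart_sub_negPart]
  rw [htsum]
  refine sub_mem_achv (s := (∑' n, u n, s)) (Prod.tendsto_iff _ _ |>.2 ⟨?_, ?_⟩) hc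
  · simpa only [Prod.fst_sum] using hu.hasSum.tendsto_sum_nat
  · simpa only [Prod.snd_sum] using hs

lemma mem_Ioo_of_mem_achv (hu : Summable u) (hu0 : ∀ n, u n ≠ 0)
    (hs : Tendsto (fun N => ∑ n ∈ Finset.range N, w n) atTop (𝓝 s))
    (hwpos : ¬∃ t, Tendsto (fun N => ∑ n ∈ Finset.range N, {n | 0 < u n}.indicator w n) atTop (𝓝 t))
    (hc : (c, b) ∈ achv (fun n => (u n, w n))) :
    c ∈ Set.Ioo (-∑' n, (u n)⁻) (∑' n, (u n)⁺) := by
  have hlt := lt_tsum_posPart_of_mem_achv hu hu0 hwpos (sub_mem_achv_prodMk hu hs hc)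
  exact ⟨by linarith, lt_tsum_posPart_of_mem_achv hu hu0 hwpos hc⟩

lemma exists_gt_mem_achv (hu : Summable u) (hu0 : ∀ n, u n ≠ 0)
    (hs : Tendsto (fun N => ∑ n ∈ Finset.range N, w n) atTop (𝓝 s)) (hw : ¬Summable w)
    (hc : -∑' n, (u n)⁻ < c) (b : ℝ) : ∃ d, d < c ∧ (d, b) ∈ achv (fun n => (u n, w n)) := by
  obtain ⟨d, hcd, hd⟩ := exists_lt_mem_achv hu hu0 hs hw
    (show ∑' n, (u n)⁺ - ∑' n, (u n)⁻ - c < ∑' n, (u n)⁺ by linarith) (s - b)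
  refine ⟨∑' n, (u n)⁺ - ∑' n, (u n)⁻ - d, by linarith, ?_⟩
  simpa only [sub_sub_cancel] using sub_mem_achv_prodMk hu hs hd

lemma achv_doubled_eq_add (hu : Summable u) (w : ℕ → ℝ) :
    achv (fun n => (u (n / 2), if n % 2 = 0 then w (n / 2) else 0)) =
      achv (fun n => (u n, w n)) + achv u ×ˢ {0} := by
  have hodd (k : ℕ) : (2 * k + 1) / 2 = k := by omega
  rw [← achv_prodMk_zero, achv_eq_achv_even_add_achv_odd]
  · simp [hodd]
  · simpa [hodd] using (hu.hasSum.prodMk hasSum_zero).summable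

theorem achv_doubled_eq_Ioo_prod_univ (hu : Summable u) (hu0 : ∀ n, u n ≠ 0)
    (hachv : achv u = Set.Icc (-∑' n, (u n)⁻) (∑' n, (u n)⁺))
    (hs : Tendsto (fun N => ∑ n ∈ Finset.range N, w n) atTop (𝓝 s))
    (hwpos : ¬∃ t, Tendsto (fun N => ∑ n ∈ Finset.range N, {n | 0 < u n}.indicator w n)
      atTop (𝓝 t)) :
    achv (fun n => (u (n / 2), if n % 2 = 0 then w (n / 2) else 0)) =
      Set.Ioo (-(2 * ∑' n, (u n)⁻)) (2 * ∑' n, (u n)⁺) ×ˢ (Set.univ : Set ℝ) := by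
  have hw : ¬Summable w := fun h => hwpos ⟨_, (h.indicator _).hasSum.tendsto_sum_nat⟩
  have hIoo {c b : ℝ} := mem_Ioo_of_mem_achv (c := c) (b := b) hu hu0 hs hwpos
  rw [achv_doubled_eq_add hu, hachv]
  refine Set.Subset.antisymm ?_ ?_
  · rintro _ ⟨⟨c, b⟩, hc, ⟨d, z⟩, ⟨hd : d ∈ Set.Icc _ _, -⟩, rfl⟩
    have hcd : c + d ∈ Set.Ioo (-(2 * ∑' n, (u n)⁻)) (2 * ∑' n, (u n)⁺) :=
      ⟨by linarith [(hIoo hc).1, hd.1], by linarith [(hIoo hc).2, hd.2]⟩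
    exact ⟨hcd, Set.mem_univ _⟩
  · rintro ⟨a, b⟩ ⟨⟨ha_gt : _ < a, ha_lt : a < _⟩, -⟩
    suffices ∃ c, (c, b) ∈ achv (fun n => (u n, w n)) ∧
        a - c ∈ Set.Icc (-∑' n, (u n)⁻) (∑' n, (u n)⁺) by
      obtain ⟨c, hc, hac⟩ := this
      exact ⟨(c, b), hc, (a - c, 0), ⟨hac, rfl⟩, by simp⟩
    rcases le_total (∑' n, (u n)⁺ - ∑' n, (u n)⁻) a with ha | ha
    · obtain ⟨c, hac, hc⟩ := exists_lt_mem_achv hu hu0 hs hw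
        (show a - ∑' n, (u n)⁺ < ∑' n, (u n)⁺ by linarith) b
      exact ⟨c, hc, by linarith [(hIoo hc).2], by linarith⟩
    · obtain ⟨c, hac, hc⟩ := exists_gt_mem_achv hu hu0 hs hw
        (show -∑' n, (u n)⁻ < a + ∑' n, (u n)⁻ by linarith) b
      exact ⟨c, hc, by linarith, by linarith [(hIoo hc).1]⟩

end DoubledSequences

section SignedDoubling

/-- The sequence `v₀, -v₀, v₁, -v₁, …`; repeating each of its terms gives
`v₀, v₀, -v₀, -v₀, v₁, v₁, …`. -/
def signedDoubling {E : Type*} [Neg E] (v : ℕ → E) (n : ℕ) : E :=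
  if n % 2 = 0 then v (n / 2) else -v (n / 2)

@[simp]
lemma signedDoubling_two_mul {E : Type*} [Neg E] (v : ℕ → E) (k : ℕ) :
    signedDoubling v (2 * k) = v k := by
  simp [signedDoubling]

@[simp]
lemma signedDoubling_two_mul_add_one {E : Type*} [Neg E] (v : ℕ → E) (k : ℕ) :
    signedDoubling v (2 * k + 1) = -v k := by
  simp [signedDoubling, Nat.add_mod, show (2 * k + 1) / 2 = k by omega]

variable {v : ℕ → ℝ} {X : ℝ}

lemma signedDoubling_ne_zero (hv : ∀ k, v k ≠ 0) (n : ℕ) : signedDoubling v n ≠ 0 := by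
  obtain ⟨k, rfl | rfl⟩ := n.even_or_odd' <;> simp [hv]

lemma signedDoubling_pos_iff (hv : ∀ k, 0 < v k) {n : ℕ} : 0 < signedDoubling v n ↔ Even n := by
  obtain ⟨k, rfl | rfl⟩ := n.even_or_odd' <;> simp [hv, (hv k).le]

lemma summable_signedDoubling (hv : Summable v) : Summable (signedDoubling v) :=
  .even_add_odd (by simpa using hv) (by simpa using hv.neg)

lemma hasSum_posPart_signedDoubling (hv : ∀ k, 0 ≤ v k) (hX : HasSum v X) :
    HasSum (fun n => (signedDoubling v n)⁺) X := by
  rw [← add_zero X]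
  refine .even_add_odd ?_ ?_
  · simpa [posPart_of_nonneg, hv] using hX
  · simp [hv]

lemma hasSum_negPart_signedDoubling (hv : ∀ k, 0 ≤ v k) (hX : HasSum v X) :
    HasSum (fun n => (signedDoubling v n)⁻) X := by
  rw [← zero_add X]
  refine .even_add_odd ?_ ?_
  · simp [hv]
  · simpa [posPart_of_nonneg, hv] using hX

lemma achv_signedDoubling_eq_sub {E : Type*} [AddCommGroup E] [UniformSpace E]
    [IsUniformAddGroup E] [CompleteSpace E] {v : ℕ → E} (hv : Summable v) :
    achv (signedDoubling v) = achv v - achv v := by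
  have hodd : Summable fun k => signedDoubling v (2 * k + 1) := by
    simpa only [signedDoubling_two_mul_add_one] using hv.neg
  rw [achv_eq_achv_even_add_achv_odd hodd, sub_eq_add_neg, ← achv_neg]
  simp only [signedDoubling_two_mul, signedDoubling_two_mul_add_one, Pi.neg_def]

lemma achv_signedDoubling (hX : HasSum v X) (hi : achv v + achv v = Set.Icc 0 (2 * X)) :
    achv (signedDoubling v) = Set.Icc (-X) X := by
  ext a
  rw [achv_signedDoubling_eq_sub hX.summable, mem_achv_sub_achv_iff hX.tendsto_sum_nat, hi,
    Set.mem_Icc, Set.mem_Icc, two_mul, add_le_add_iff_right, neg_le_iff_add_nonneg]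

end SignedDoubling

section AlternatingSeries

lemma sign_eq_of_alternating {R : Type*} [Ring R] [LinearOrder R] [IsStrictOrderedRing R]
    {w : ℕ → R} (halt : ∀ k, w k * w (k + 1) < 0) (k : ℕ) :
    SignType.sign (w k) = (-1) ^ k * SignType.sign (w 0) := by
  induction k with
  | zero => simp
  | succ k ih =>
    have hprod := sign_neg (halt k)
    rw [sign_mul] at hprod
    rw [pow_succ, mul_right_comm, ← ih]
    revert hprod
    generalize SignType.sign (w k) = a
    generalize SignType.sign (w (k + 1)) = b
    revert a b
    decide

lemma not_tendsto_sum_range_even_of_alternating {w : ℕ → ℝ} (halt : ∀ k, w k * w (k + 1) < 0)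
    (hwconv : ∃ s, Tendsto (fun N => ∑ k ∈ Finset.range N, w k) atTop (𝓝 s))
    (hwnabs : ¬Summable fun k => |w k|) :
    ¬∃ t, Tendsto (fun N => ∑ k ∈ Finset.range N, w (2 * k)) atTop (𝓝 t) := by
  rintro ⟨t, ht⟩
  obtain ⟨s, hs⟩ := hwconv
  let σ : ℝ := SignType.sign (w 0)
  have habs (k : ℕ) : |w k| = σ * (2 * {n | Even n}.indicator w k - w k) := by
    rw [← sign_mul_self, sign_eq_of_alternating halt]
    rcases k.even_or_odd with hk | hk
    · simp [hk, hk.neg_one_pow, two_mul, σ]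
    · simp [hk, hk.neg_one_pow, σ]
  refine hwnabs ((hasSum_iff_tendsto_nat_of_nonneg (fun k => abs_nonneg (w k))
    (σ * (2 * t - s))).2 ?_).summable
  simpa only [habs, ← Finset.mul_sum, Finset.sum_sub_distrib] using
    (((tendsto_sum_range_even_iff.1 ht).const_mul 2).sub hs).const_mul σ

end AlternatingSeries

theorem stmt_17_general (v w : ℕ → ℝ) (X : ℝ) (hvpos : ∀ k, 0 < v k) (hX : HasSum v X)
    (hi : achv v + achv v = Set.Icc 0 (2 * X))
    (hwconv : ∃ s, Tendsto (fun N => ∑ k ∈ Finset.range N, w k) atTop (𝓝 s))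
    (hweven : ¬∃ t, Tendsto (fun N => ∑ k ∈ Finset.range N, w (2 * k)) atTop (𝓝 t)) :
    achv (fun n => (((if n % 4 ≤ 1 then v (n / 4) else -v (n / 4)),
        (if n % 2 = 0 then w (n / 2) else 0)) : ℝ × ℝ)) =
      Set.Ioo (-(2 * X)) (2 * X) ×ˢ (Set.univ : Set ℝ) := by
  obtain ⟨s, hs⟩ := hwconv
  have hpos := (hasSum_posPart_signedDoubling (fun k => (hvpos k).le) hX).tsum_eq
  have hneg := (hasSum_negPart_signedDoubling (fun k => (hvpos k).le) hX).tsum_eq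
  have hfst (n : ℕ) : (if n % 4 ≤ 1 then v (n / 4) else -v (n / 4)) = signedDoubling v (n / 2) := by
    rw [signedDoubling, Nat.div_div_eq_div_mul]
    exact if_congr (by omega) rfl rfl
  simp_rw [hfst]
  have := achv_doubled_eq_Ioo_prod_univ (u := signedDoubling v) (w := w) (s := s)
    (summable_signedDoubling hX.summable) (signedDoubling_ne_zero fun k => (hvpos k).ne')
    (by rw [hpos, hneg, achv_signedDoubling hX hi]) hs
    (by simpa only [signedDoubling_pos_iff hvpos, ← tendsto_sum_range_even_iff] using hweven)
  rwa [hpos, hneg] at this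

/-- Let `v` be a positive summable sequence with sum `X` satisfying
(i) `A(v) + A(v) = [0, 2X]` and (ii) for every `a ∈ (0, 2X)` there is a nondegenerate
interval `I ⊆ A(v)` each of whose points `t` admits `z ∈ A(v)` with `t + z = a`. Let `w` be
a sequence of nonzero reals with alternating signs whose series is conditionally convergent.
Define pairs by `x_{4k-3} = x_{4k-2} = v_k`, `x_{4k-1} = x_{4k} = -v_k`, `y_{2k-1} = w_k`,
`y_{2k} = 0`. Then the achievement set of the pairs equals `(-2X, 2X) × ℝ`. -/
theorem stmt_17 (v w : ℕ → ℝ) (X : ℝ)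
    (hvpos : ∀ k, 0 < v k) (hX : HasSum v X)
    (hi : achv v + achv v = Set.Icc 0 (2 * X))
    (hii : ∀ a ∈ Set.Ioo (0 : ℝ) (2 * X), ∃ I : Set ℝ, I ⊆ achv v ∧ I.OrdConnected ∧
      I.Nontrivial ∧ ∀ t ∈ I, ∃ z ∈ achv v, t + z = a)
    (hwne : ∀ k, w k ≠ 0) (halt : ∀ k, w k * w (k + 1) < 0)
    (hwconv : ∃ s, Tendsto (fun N => ∑ k ∈ Finset.range N, w k) atTop (𝓝 s))
    (hwnabs : ¬ Summable fun k => |w k|) :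
    achv (fun n => (((if n % 4 ≤ 1 then v (n / 4) else -v (n / 4)),
        (if n % 2 = 0 then w (n / 2) else 0)) : ℝ × ℝ)) =
      Set.Ioo (-(2 * X)) (2 * X) ×ˢ (Set.univ : Set ℝ) :=
  stmt_17_general v w X hvpos hX hi hwconv
    (not_tendsto_sum_range_even_of_alternating halt hwconv hwnabs)
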